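/- The identity map of I belongs to cl T(I) but is not transitive; that is, for every ε > 0 there exists a transitive continuous map f : I → I with sup_{x∈I} |f(x) − x| < ε, while the identity itself is not transitive. In particular T(I) is a proper subset of cl T(I). -/

import Mathlib

/-!
For each `N` a transitive map at distance at most `2 / N` from the identity is obtained from a
zigzag `zig : ℝ → ℝ`, which is `x` plus a triangle wave of period `1` and amplitude `2`.  It is
continuous, odd, commutes with integer translations, and has slopes `9` and `-7`.

Expansion: an interval of length at most `1/2` has at most one turning point of `zig` inside it, so one
of its halves is stretched by a factor of at least `7` (`exists_zig_cover`), and iterating produces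
an interval of length at least `1`.  Such an interval contains a local maximum and a local minimum
of `zig` so close to its ends that its image extends it by `1` on each side (`zig_cover_long`).
Hence the iterates of every nondegenerate interval eventually cover any given point
(`zig_iterate_hits`).

Descent to `[0,1]`: let `fold x` be the distance from `x` to `2ℤ`, that is, the norm on
`ℝ / 2ℤ`; it is the quotient map of `ℝ` by the group generated by the reflections in `0` and `1`,
and it restricts to the identity on `[0,1]`.  The symmetries of `zig` give that
`x ↦ zig (N x) / N` respects the fibres of `fold`, so it induces a self-map `zigI N` of `[0,1]` with
`zigI N ∘ fold = fold ∘ (zig (N ·) / N)`.  Density of the orbits of intervals passes to the factor,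
and `fold` being `1`-Lipschitz gives the distance estimate.
-/

open unitInterval

/-- A continuous self-map of the unit interval is (topologically) transitive if for every pair
of nonempty open sets `U, V ⊆ I` there is a positive integer `n` with `U ∩ f⁻ⁿ(V) ≠ ∅`. -/
def IsTransitiveMap (f : C(I, I)) : Prop :=
  ∀ U V : Set I, IsOpen U → IsOpen V → U.Nonempty → V.Nonempty →
    ∃ n : ℕ, 0 < n ∧ (U ∩ (f : I → I)^[n] ⁻¹' V).Nonempty

/-- `T(I)`: the set of transitive maps in `C(I, I)`. -/
def TransSet : Set C(I, I) := {f | IsTransitiveMap f}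

/-! ### The triangle wave -/

/-- The distance from `x` to the nearest integer, as the norm on `ℝ / ℤ`. -/
noncomputable def tri (x : ℝ) : ℝ := ‖(x : UnitAddCircle)‖

lemma continuous_tri : Continuous tri :=
  continuous_norm.comp (AddCircle.continuous_mk' 1)

lemma tri_add_int (x : ℝ) (k : ℤ) : tri (x + k) = tri x := by
  unfold tri
  have h : ((k : ℝ) : UnitAddCircle) = 0 := by
    rw [AddCircle.coe_eq_zero_iff]; exact ⟨k, by simp⟩
  rw [AddCircle.coe_add, h, add_zero]

lemma tri_neg (x : ℝ) : tri (-x) = tri x := by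
  unfold tri; rw [AddCircle.coe_neg, norm_neg]

lemma tri_eq_abs {x : ℝ} (k : ℤ) (h : |x - k| ≤ 1 / 2) : tri x = |x - k| := by
  have h1 : tri x = tri (x - k) := by
    rw [← tri_add_int (x - k) k]; congr 1; ring
  rw [h1, tri, (AddCircle.norm_coe_eq_abs_iff (1 : ℝ) one_ne_zero).2 (by simpa using h)]

lemma tri_eq_left {x : ℝ} (k : ℤ) (h0 : k ≤ x) (h1 : x ≤ k + 1 / 2) : tri x = x - k := by
  rw [tri_eq_abs k, abs_of_nonneg] <;> first | rw [abs_le] | skip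
  · linarith
  · constructor <;> linarith

lemma tri_eq_right {x : ℝ} (k : ℤ) (h0 : k + 1 / 2 ≤ x) (h1 : x ≤ k + 1) :
    tri x = k + 1 - x := by
  have h2 : |x - ((k + 1 : ℤ) : ℝ)| = k + 1 - x := by
    rw [abs_of_nonpos] <;> push_cast <;> linarith
  rw [tri_eq_abs (k + 1), h2]
  rw [h2]; linarith

lemma tri_nonneg (x : ℝ) : 0 ≤ tri x := norm_nonneg _

lemma tri_le_half (x : ℝ) : tri x ≤ 1 / 2 := by
  have := AddCircle.norm_le_half_period (1 : ℝ) one_ne_zero (x := (x : UnitAddCircle))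
  simpa [tri] using this

lemma tri_add_half (x : ℝ) : tri (x + 1 / 2) = 1 / 2 - tri x := by
  have h0 := Int.floor_le x
  have h1 := (Int.lt_floor_add_one x).le
  rcases le_total x (⌊x⌋ + 1 / 2) with h | h
  · rw [tri_eq_left ⌊x⌋ h0 h, tri_eq_right ⌊x⌋] <;> linarith
  · rw [tri_eq_right ⌊x⌋ h h1, tri_eq_left (⌊x⌋ + 1)] <;> push_cast <;> linarith

/-- Turning points of `tri` are `1/2` apart, so of two adjacent intervals of length `h ≤ 1/4`, at
least one has no turning point in its interior. -/
lemma tri_step (y h : ℝ) (h0 : 0 ≤ h) (h4 : h ≤ 1 / 4) :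
    ∃ z, (z = y ∨ z = y + h) ∧ |tri (z + h) - tri z| = h := by
  have hk0 := Int.floor_le y
  have hk1 := (Int.lt_floor_add_one y).le
  set k := ⌊y⌋
  rcases le_total y (k + 1 / 2) with a | a
  · rcases le_total (y + h) (k + 1 / 2) with b | b
    · refine ⟨y, Or.inl rfl, ?_⟩
      rw [tri_eq_left k hk0 a, tri_eq_left k (by linarith) b]
      convert abs_of_nonneg h0 using 2; ring
    · refine ⟨y + h, Or.inr rfl, ?_⟩
      rw [tri_eq_right k (by linarith) (by linarith), tri_eq_right k b (by linarith)]
      convert abs_of_nonneg h0 using 1; rw [← abs_neg]; congr 1; ring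
  · rcases le_total (y + h) (k + 1) with b | b
    · refine ⟨y, Or.inl rfl, ?_⟩
      rw [tri_eq_right k a hk1, tri_eq_right k (by linarith) b]
      convert abs_of_nonneg h0 using 1; rw [← abs_neg]; congr 1; ring
    · refine ⟨y + h, Or.inr rfl, ?_⟩
      rw [tri_eq_left (k + 1) (by push_cast; linarith) (by push_cast; linarith),
        tri_eq_left (k + 1) (by push_cast; linarith) (by push_cast; linarith)]
      convert abs_of_nonneg h0 using 2; ring

/-! ### The expanding zigzag on the line -/

/-- The identity plus a triangle wave of period `1` and amplitude `2`, with maxima of the wave at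
`1/4 + ℤ` and minima at `-1/4 + ℤ`. -/
noncomputable def zig (x : ℝ) : ℝ := x + 2 - 8 * tri (x - 1 / 4)

lemma continuous_zig : Continuous zig := by
  unfold zig
  have := continuous_tri
  fun_prop

lemma zig_add_int (x : ℝ) (k : ℤ) : zig (x + k) = zig x + k := by
  unfold zig
  rw [show x + k - 1 / 4 = x - 1 / 4 + k by ring, tri_add_int]; ring

lemma zig_neg (x : ℝ) : zig (-x) = -zig x := by
  unfold zig
  have h := tri_add_half (x - 1 / 4)
  rw [show -x - 1 / 4 = -(x - 1 / 4 + 1 / 2) by ring, tri_neg, h]; ring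

lemma abs_zig_sub_le (x : ℝ) : |zig x - x| ≤ 2 := by
  unfold zig
  have := tri_nonneg (x - 1 / 4)
  have := tri_le_half (x - 1 / 4)
  rw [abs_le]; constructor <;> linarith

lemma Icc_subset_zig_image {a b x y : ℝ} (hx : x ∈ Set.Icc a b) (hy : y ∈ Set.Icc a b) :
    Set.Icc (zig x) (zig y) ⊆ zig '' Set.Icc a b :=
  (isPreconnected_Icc.image zig continuous_zig.continuousOn).Icc_subset
    (Set.mem_image_of_mem _ hx) (Set.mem_image_of_mem _ hy)

/-- Short intervals at least double in length, until length `1` is reached. -/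
lemma exists_zig_cover {a b : ℝ} (hab : a < b) :
    ∃ a' b', min 1 (2 * (b - a)) ≤ b' - a' ∧ Set.Icc a' b' ⊆ zig '' Set.Icc a b := by
  -- `[a, a + 2 * h]` is `[a, b]`, cut down to length `1/2` if it is longer.
  set h := min (1 / 4) ((b - a) / 2) with hh
  have h4 : h ≤ 1 / 4 := min_le_left _ _
  have hb : h ≤ (b - a) / 2 := min_le_right _ _
  have h0 : 0 ≤ h := le_min (by norm_num) (by linarith)
  have hm : min 1 (2 * (b - a)) ≤ 7 * h := by
    rcases min_cases (1 / 4) ((b - a) / 2) with c | c <;> rw [hh, c.1]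
    · exact (min_le_left _ _).trans (by norm_num)
    · exact (min_le_right _ _).trans (by linarith)
  obtain ⟨z, hz, ht⟩ := tri_step (a - 1 / 4) h h0 h4
  have hz1 : z + 1 / 4 ∈ Set.Icc a b := by
    rcases hz with rfl | rfl <;> constructor <;> linarith
  have hz2 : z + h + 1 / 4 ∈ Set.Icc a b := by
    rcases hz with rfl | rfl <;> constructor <;> linarith
  have e1 : zig (z + 1 / 4) = z + 1 / 4 + 2 - 8 * tri z := by
    unfold zig; rw [add_sub_cancel_right]
  have e2 : zig (z + h + 1 / 4) = z + h + 1 / 4 + 2 - 8 * tri (z + h) := by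
    unfold zig; rw [add_sub_cancel_right]
  rcases abs_choice (tri (z + h) - tri z) with c | c <;> rw [c] at ht
  · exact ⟨_, _, by rw [e1, e2]; linarith, Icc_subset_zig_image hz2 hz1⟩
  · exact ⟨_, _, by rw [e1, e2]; linarith, Icc_subset_zig_image hz1 hz2⟩

/-- Intervals of length at least `1` grow by `1` on each side. -/
lemma zig_cover_long {a b : ℝ} (hab : a + 1 ≤ b) :
    Set.Icc (a - 1) (b + 1) ⊆ zig '' Set.Icc a b := by
  have f1 := Int.floor_le (b - 1 / 4)
  have f2 := (Int.lt_floor_add_one (b - 1 / 4)).le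
  have c1 := Int.le_ceil (a + 1 / 4)
  have c2 := (Int.ceil_lt_add_one (a + 1 / 4)).le
  set k := ⌊b - 1 / 4⌋
  set l := ⌈a + 1 / 4⌉
  -- the last local maximum and the first local minimum of `zig` in `[a, b]`
  have hmax : zig (k + 1 / 4) = k + 1 / 4 + 2 := by
    unfold zig
    rw [tri_eq_left k (by linarith) (by linarith)]; ring
  have hmin : zig (l - 1 / 4) = l - 1 / 4 - 2 := by
    unfold zig
    rw [tri_eq_right (l - 1) (by push_cast; linarith) (by push_cast; linarith)]
    push_cast; ring
  refine subset_trans (Set.Icc_subset_Icc ?_ ?_)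
    (Icc_subset_zig_image (x := l - 1 / 4) (y := k + 1 / 4) ⟨?_, ?_⟩ ⟨?_, ?_⟩)
  · rw [hmin]; linarith
  · rw [hmax]; linarith
  all_goals linarith

lemma subset_iterate_image_succ {α : Type*} {g : α → α} {n : ℕ} {s t u : Set α}
    (h1 : t ⊆ g^[n] '' s) (h2 : u ⊆ g '' t) : u ⊆ g^[n + 1] '' s := by
  rw [Function.iterate_succ', Set.image_comp]
  exact h2.trans (Set.image_mono h1)

lemma exists_zig_iterate_cover {a b : ℝ} (hab : a < b) (n : ℕ) :
    ∃ a' b', min 1 (2 ^ n * (b - a)) ≤ b' - a' ∧ Set.Icc a' b' ⊆ zig^[n] '' Set.Icc a b := by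
  induction n with
  | zero => exact ⟨a, b, by simp, by simp⟩
  | succ n ih =>
    obtain ⟨c, d, hcd, hsub⟩ := ih
    have hpos : 0 < 2 ^ n * (b - a) := mul_pos (by positivity) (by linarith)
    have hlt : c < d := by
      have := lt_min one_pos hpos
      linarith
    obtain ⟨c', d', h', hsub'⟩ := exists_zig_cover hlt
    refine ⟨c', d', le_trans ?_ h', subset_iterate_image_succ hsub hsub'⟩
    refine le_min (min_le_left _ _) ?_
    rw [pow_succ]
    rcases min_cases 1 (2 ^ n * (b - a)) with e | e
    · exact (min_le_left _ _).trans (by linarith)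
    · exact (min_le_right _ _).trans (by linarith)

/-- Forward iterates of any nondegenerate interval reach any given point. -/
lemma zig_iterate_hits {a b : ℝ} (hab : a < b) (c : ℝ) :
    ∃ n : ℕ, 0 < n ∧ ∃ y ∈ Set.Icc a b, zig^[n] y = c := by
  obtain ⟨m, hm⟩ := pow_unbounded_of_one_lt (1 / (b - a)) (one_lt_two (α := ℝ))
  rw [div_lt_iff₀ (by linarith)] at hm
  obtain ⟨p, q, hpq, hsub⟩ := exists_zig_iterate_cover hab m
  rw [min_eq_left hm.le] at hpq
  have key : ∀ j : ℕ, Set.Icc (p - j) (q + j) ⊆ zig^[m + j] '' Set.Icc a b := by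
    intro j
    induction j with
    | zero => simpa using hsub
    | succ j ih =>
      have hj : (0 : ℝ) ≤ j := j.cast_nonneg
      have := zig_cover_long (a := p - j) (b := q + j) (by linarith)
      refine subset_iterate_image_succ ih (subset_trans (Set.Icc_subset_Icc ?_ ?_) this) <;>
        push_cast <;> linarith
  obtain ⟨j, hj⟩ := exists_nat_gt (max (p - c) (c - q))
  have h1 := (le_max_left (p - c) (c - q)).trans_lt hj
  have h2 := (le_max_right (p - c) (c - q)).trans_lt hj
  obtain ⟨y, hy, hyc⟩ := key (j + 1) (show c ∈ _ by
    push_cast; constructor <;> linarith)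
  exact ⟨m + (j + 1), by omega, y, hy, hyc⟩

/-! ### Folding the line onto the unit interval -/

/-- The distance from `x` to `2ℤ`, as the norm on `ℝ / 2ℤ`, viewed as a point of `[0,1]`. -/
noncomputable def fold (x : ℝ) : I :=
  ⟨‖(x : AddCircle (2 : ℝ))‖, norm_nonneg _, by
    have := AddCircle.norm_le_half_period (2 : ℝ) two_ne_zero (x := (x : AddCircle (2 : ℝ)))
    simpa using this⟩

lemma continuous_fold : Continuous fold :=
  Continuous.subtype_mk (continuous_norm.comp (AddCircle.continuous_mk' 2)) _

lemma fold_coe (x : I) : fold x = x := by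
  apply Subtype.ext
  change ‖((x : ℝ) : AddCircle (2 : ℝ))‖ = x
  have hx : |(x : ℝ)| = x := abs_of_nonneg x.2.1
  rw [(AddCircle.norm_coe_eq_abs_iff (2 : ℝ) two_ne_zero).2 (by
    rw [hx]; simpa using x.2.2), hx]

lemma fold_neg (x : ℝ) : fold (-x) = fold x := by
  apply Subtype.ext
  change ‖((-x : ℝ) : AddCircle (2 : ℝ))‖ = ‖(x : AddCircle (2 : ℝ))‖
  rw [AddCircle.coe_neg, norm_neg]

lemma fold_add (x : ℝ) (k : ℤ) : fold (x + 2 * k) = fold x := by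
  apply Subtype.ext
  change ‖((x + 2 * k : ℝ) : AddCircle (2 : ℝ))‖ = ‖(x : AddCircle (2 : ℝ))‖
  have h : ((2 * k : ℝ) : AddCircle (2 : ℝ)) = 0 := by
    rw [AddCircle.coe_eq_zero_iff]; exact ⟨k, by simp [mul_comm]⟩
  rw [AddCircle.coe_add, h, add_zero]

lemma abs_fold_sub_le (x y : ℝ) : |(fold x : ℝ) - fold y| ≤ |x - y| := by
  change |‖(x : AddCircle (2 : ℝ))‖ - ‖(y : AddCircle (2 : ℝ))‖| ≤ _
  refine (abs_norm_sub_norm_le _ _).trans ?_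
  rw [← AddCircle.coe_sub]
  exact QuotientAddGroup.norm_mk_le_norm

/-- `x` and `fold x` lie in the same orbit of the reflection group. -/
lemma fold_spec (x : ℝ) : ∃ k : ℤ, (fold x : ℝ) = x + 2 * k ∨ (fold x : ℝ) = -x + 2 * k := by
  have h : (fold x : ℝ) = |x - round (2⁻¹ * x) * 2| := AddCircle.norm_eq (2 : ℝ)
  rw [h]
  rcases abs_choice (x - round (2⁻¹ * x) * 2) with e | e <;> rw [e]
  · exact ⟨-round (2⁻¹ * x), Or.inl (by push_cast; ring)⟩
  · exact ⟨round (2⁻¹ * x), Or.inr (by ring)⟩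

/-- The zigzag on scale `1 / N`. -/
noncomputable def zigN (N : ℕ) (x : ℝ) : ℝ := zig (N * x) / N

lemma fold_zigN_fold {N : ℕ} (hN : 0 < N) (x : ℝ) :
    fold (zigN N (fold x)) = fold (zigN N x) := by
  have hN' : (N : ℝ) ≠ 0 := by positivity
  have hadd (y : ℝ) (k : ℤ) : zigN N (y + 2 * k) = zigN N y + 2 * k := by
    unfold zigN
    rw [show N * (y + 2 * k) = N * y + ((N * (2 * k) : ℤ) : ℝ) by push_cast; ring, zig_add_int]
    push_cast; field_simp
  have hneg (y : ℝ) : zigN N (-y) = -zigN N y := by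
    unfold zigN
    rw [mul_neg, zig_neg, neg_div]
  obtain ⟨k, h | h⟩ := fold_spec x
  · rw [h, hadd, fold_add]
  · rw [h, hadd, fold_add, hneg, fold_neg]

/-- The self-map of the unit interval induced by `zigN N` through `fold`. -/
noncomputable def zigI (N : ℕ) : C(I, I) where
  toFun x := fold (zigN N x)
  continuous_toFun := by
    have := continuous_zig
    have := continuous_fold
    unfold zigN
    fun_prop

lemma zigI_iterate_fold {N : ℕ} (hN : 0 < N) (n : ℕ) (x : ℝ) :
    (zigI N : I → I)^[n] (fold x) = fold (zig^[n] (N * x) / N) := by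
  have hN' : (N : ℝ) ≠ 0 := by positivity
  induction n with
  | zero => simp [hN']
  | succ n ih =>
    rw [Function.iterate_succ_apply', Function.iterate_succ_apply', ih]
    change fold (zigN N (fold _)) = _
    rw [fold_zigN_fold hN, zigN, mul_div_cancel₀ _ hN']

lemma isTransitiveMap_zigI {N : ℕ} (hN : 0 < N) : IsTransitiveMap (zigI N) := by
  have hN' : (0 : ℝ) < N := by positivity
  rintro U V hU - ⟨u, hu⟩ ⟨v, hv⟩
  have hopen : IsOpen (fold ⁻¹' U) := hU.preimage continuous_fold
  have hmem : (u : ℝ) ∈ fold ⁻¹' U := by rw [Set.mem_preimage, fold_coe]; exact hu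
  obtain ⟨δ, hδ, hball⟩ := Metric.isOpen_iff.1 hopen _ hmem
  obtain ⟨n, hn, y, hy, hyv⟩ := zig_iterate_hits (a := N * (u : ℝ)) (b := N * (u + δ / 2))
    (mul_lt_mul_of_pos_left (by linarith) hN') (N * v)
  refine ⟨n, hn, fold (y / N), hball ?_, ?_⟩
  · have h1 : (u : ℝ) ≤ y / N := by rw [le_div_iff₀ hN']; linarith [hy.1]
    have h2 : y / N ≤ u + δ / 2 := by rw [div_le_iff₀ hN']; linarith [hy.2]
    rw [Metric.mem_ball, Real.dist_eq, abs_lt]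
    constructor <;> linarith
  · rw [Set.mem_preimage, zigI_iterate_fold hN, mul_div_cancel₀ _ hN'.ne', hyv,
      mul_div_cancel_left₀ _ hN'.ne', fold_coe]
    exact hv

lemma dist_zigI_le {N : ℕ} (hN : 0 < N) : dist (zigI N) (ContinuousMap.id I) ≤ 2 / N := by
  have hN' : (0 : ℝ) < N := by positivity
  rw [ContinuousMap.dist_le (by positivity)]
  intro x
  change |(fold (zigN N x) : ℝ) - x| ≤ _
  have h := abs_fold_sub_le (zigN N x) x
  rw [fold_coe] at h
  refine h.trans ?_
  have e : zigN N x - x = (zig (N * x) - N * x) / N := by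
    unfold zigN; field_simp
  rw [e, abs_div, abs_of_pos hN']
  gcongr
  exact abs_zig_sub_le _

lemma not_isTransitiveMap_id : ¬ IsTransitiveMap (ContinuousMap.id I) := by
  intro h
  obtain ⟨U, V, hU, hV, h0, h1, hd⟩ := t2_separation (zero_ne_one (α := I))
  obtain ⟨n, -, x, hxU, hxV⟩ := h U V hU hV ⟨0, h0⟩ ⟨1, h1⟩
  rw [Set.mem_preimage, ContinuousMap.coe_id, Function.iterate_id] at hxV
  exact Set.disjoint_left.1 hd hxU hxV

/-- The identity map lies in `cl T(I)` but is not transitive; hence `T(I) ⊊ cl T(I)`. -/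
theorem id_mem_closure_transSet_not_transitive :
    (∀ ε > (0 : ℝ), ∃ f : C(I, I), IsTransitiveMap f ∧
      dist f (ContinuousMap.id I) < ε) ∧
    (ContinuousMap.id I ∈ closure TransSet) ∧
    ¬ IsTransitiveMap (ContinuousMap.id I) ∧
    TransSet ⊂ closure TransSet := by
  have approx : ∀ ε > (0 : ℝ), ∃ f : C(I, I), IsTransitiveMap f ∧
      dist f (ContinuousMap.id I) < ε := by
    intro ε hε
    obtain ⟨N, hN⟩ := exists_nat_gt (2 / ε)
    have hN' : (0 : ℝ) < N := lt_trans (by positivity) hN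
    have hN0 : 0 < N := by exact_mod_cast hN'
    refine ⟨zigI N, isTransitiveMap_zigI hN0, (dist_zigI_le hN0).trans_lt ?_⟩
    rw [div_lt_iff₀ hε] at hN
    rw [div_lt_iff₀ hN']
    linarith
  have hcl : ContinuousMap.id I ∈ closure TransSet := by
    rw [Metric.mem_closure_iff]
    intro ε hε
    obtain ⟨f, hf, hd⟩ := approx ε hε
    exact ⟨f, hf, by rwa [dist_comm]⟩
  exact ⟨approx, hcl, not_isTransitiveMap_id, subset_closure,
    fun h => not_isTransitiveMap_id (h hcl)⟩
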